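/- arXiv:2506.08374 — 2 statements merged into one kernel-verified Lean document; each statement's English description precedes it below -/
import Mathlib

section
/- Let τ > 0 and z, u ∈ ℝ^m with z_i ≥ 0 for all i. Then z ∈ Prox_{τg}(z + τu) holds if and only if for every i ∈ {1,…,m} the pair (u_i, z_i) lies in Ω₁ ∪ Ω₂, where Ω₁ := {0} × [√(2μτ), ∞) and Ω₂ := (−∞, √(2μ/τ)] × {0}. -/
open scoped RealInnerProductSpace
open Filter Topology

/- Number of nonzero coordinates of `z` (the "ℓ₀ norm"). -/
open Classical in
noncomputable def zeroNorm {m : ℕ} (z : EuclideanSpace ℝ (Fin m)) : ℕ :=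
  (Finset.univ.filter fun i => z i ≠ 0).card

/- `g(z) = μ‖z‖₀` if `z ≥ 0` componentwise, `+∞` otherwise. -/
open Classical in
noncomputable def gfun {m : ℕ} (μ : ℝ) (z : EuclideanSpace ℝ (Fin m)) : EReal :=
  if ∀ i, 0 ≤ z i then ((μ * zeroNorm z : ℝ) : EReal) else ⊤

/- The proximal set `Prox_{τ g}(u)`: minimizers of `g(z) + (1/(2τ))‖z - u‖²`. -/
noncomputable def proxSet {m : ℕ} (μ τ : ℝ) (u : EuclideanSpace ℝ (Fin m)) :
    Set (EuclideanSpace ℝ (Fin m)) :=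
  {z | ∀ w, gfun μ z + ((1 / (2 * τ) * ‖z - u‖ ^ 2 : ℝ) : EReal)
        ≤ gfun μ w + ((1 / (2 * τ) * ‖w - u‖ ^ 2 : ℝ) : EReal)}

/-!
Both `g` and the squared distance are sums over coordinates, and the domain of `g` is a product of
half-lines, so membership in the proximal set is decided coordinate by coordinate. On the half-line
`[0, ∞)` the scalar cost at centre `a` has only two candidate minimizers: the point `0`, of cost
`a² / (2τ)`, and, if `a > 0`, the point `a`, of cost `μ`. They tie exactly at `a = √(2μτ)`.
-/

section Separable

variable {ι β : Type*} {α : ι → Type*} [Fintype ι]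
  [AddCommMonoid β] [PartialOrder β] [IsOrderedCancelAddMonoid β]

theorem isMinOn_sum_univ_pi_iff {f : ∀ i, α i → β} {s : ∀ i, Set (α i)} {x : ∀ i, α i}
    (hx : x ∈ Set.univ.pi s) :
    IsMinOn (fun y => ∑ i, f i (y i)) (Set.univ.pi s) x ↔ ∀ i, IsMinOn (f i) (s i) (x i) := by
  classical
  simp only [isMinOn_iff]
  refine ⟨fun h i t ht => ?_, fun h y hy => Finset.sum_le_sum fun i _ => h i (y i) (hy i trivial)⟩
  have update_mem : Function.update x i t ∈ Set.univ.pi s :=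
    (Set.update_mem_pi_iff_of_mem hx).2 fun _ => ht
  have rest_eq : ∑ j ∈ Finset.univ.erase i, f j (Function.update x i t j) =
      ∑ j ∈ Finset.univ.erase i, f j (x j) :=
    Finset.sum_congr rfl fun j hj => by rw [Function.update_of_ne (Finset.ne_of_mem_erase hj)]
  have sum_le := h _ update_mem
  rw [← Finset.add_sum_erase _ _ (Finset.mem_univ i),
    ← Finset.add_sum_erase _ (fun j => f j (Function.update x i t j)) (Finset.mem_univ i),
    rest_eq, Function.update_self] at sum_le
  exact le_of_add_le_add_right sum_le

end Separable

/-- The contribution of one nonnegative coordinate `t` to the objective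
`g(z) + (1/(2τ))‖z - v‖²`, where `a` is the corresponding coordinate of `v`. -/
noncomputable def coordCost (μ τ a t : ℝ) : ℝ :=
  μ * (if t ≠ 0 then 1 else 0) + 1 / (2 * τ) * (t - a) ^ 2

/-- The one-dimensional counterpart of `proxSet`: minimizers of `coordCost μ τ a` over `[0, ∞)`.
The value `+∞` of `g` is encoded by the constraint, so that the cost stays real-valued. -/
def coordProx (μ τ a : ℝ) : Set ℝ :=
  {t | 0 ≤ t ∧ IsMinOn (coordCost μ τ a) (Set.Ici 0) t}

section ScalarProx

variable {μ τ a t : ℝ}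

theorem coordCost_zero : coordCost μ τ a 0 = a ^ 2 / (2 * τ) := by
  simp [coordCost, div_eq_inv_mul]

theorem coordCost_of_ne_zero (ht : t ≠ 0) : coordCost μ τ a t = μ + (t - a) ^ 2 / (2 * τ) := by
  simp [coordCost, ht, div_eq_inv_mul]

theorem zero_mem_coordProx_iff (hμ : 0 ≤ μ) (hτ : 0 < τ) :
    0 ∈ coordProx μ τ a ↔ a ≤ √(2 * μ * τ) := by
  constructor
  · rintro ⟨-, zero_min⟩
    rcases le_or_gt a 0 with ha | ha
    · exact ha.trans (Real.sqrt_nonneg _)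
    have cost_le := isMinOn_iff.1 zero_min a ha.le
    rw [coordCost_zero, coordCost_of_ne_zero ha.ne', sub_self, zero_pow two_ne_zero, zero_div,
      add_zero, div_le_iff₀ (by positivity)] at cost_le
    exact Real.le_sqrt_of_sq_le (by linarith)
  · refine fun ha => ⟨le_rfl, isMinOn_iff.2 fun s (hs : 0 ≤ s) => ?_⟩
    rcases eq_or_ne s 0 with rfl | hs0
    · rfl
    have sq_le : a ^ 2 ≤ 2 * μ * τ + (s - a) ^ 2 := by
      rcases le_or_gt a 0 with ha0 | ha0
      · nlinarith [mul_nonneg hμ hτ.le, mul_nonneg hs (neg_nonneg.2 ha0)]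
      · linarith [(Real.le_sqrt' ha0).1 ha, sq_nonneg (s - a)]
    calc coordCost μ τ a 0 = a ^ 2 / (2 * τ) := coordCost_zero
      _ ≤ (2 * μ * τ + (s - a) ^ 2) / (2 * τ) := by gcongr
      _ = μ + (s - a) ^ 2 / (2 * τ) := by field_simp
      _ = coordCost μ τ a s := (coordCost_of_ne_zero hs0).symm

theorem eq_of_mem_coordProx_of_pos (hτ : 0 < τ) (ht : 0 < t) (hmem : t ∈ coordProx μ τ a) :
    a = t := by
  -- The competitor is the projection of `a` onto `[t / 2, ∞)`: it stays away from the jump at `0`.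
  have competitor_pos : 0 < max (t / 2) a := lt_max_of_lt_left (half_pos ht)
  have cost_le := isMinOn_iff.1 hmem.2 _ competitor_pos.le
  rw [coordCost_of_ne_zero ht.ne', coordCost_of_ne_zero competitor_pos.ne', add_le_add_iff_left,
    div_le_div_iff_of_pos_right (by positivity)] at cost_le
  rcases le_total (t / 2) a with ha | ha
  · rw [max_eq_right ha, sub_self] at cost_le
    nlinarith
  · rw [max_eq_left ha] at cost_le
    nlinarith

theorem self_mem_coordProx_self_iff (hτ : 0 < τ) (ht : 0 < t) :
    t ∈ coordProx μ τ t ↔ √(2 * μ * τ) ≤ t := by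
  have cost_self : coordCost μ τ t t = μ := by simp [coordCost_of_ne_zero ht.ne']
  have cost_self_le_zero_iff : coordCost μ τ t t ≤ coordCost μ τ t 0 ↔ √(2 * μ * τ) ≤ t := by
    rw [cost_self, coordCost_zero, le_div_iff₀ (by positivity), Real.sqrt_le_left ht.le,
      mul_left_comm, mul_assoc]
  rw [← cost_self_le_zero_iff]
  refine ⟨fun h => isMinOn_iff.1 h.2 0 Set.self_mem_Ici,
    fun h => ⟨ht.le, isMinOn_iff.2 fun s _ => ?_⟩⟩
  rcases eq_or_ne s 0 with rfl | hs
  · exact h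
  · rw [cost_self, coordCost_of_ne_zero hs]
    exact le_add_of_nonneg_right (by positivity)

theorem mem_coordProx_iff_of_pos (hτ : 0 < τ) (ht : 0 < t) :
    t ∈ coordProx μ τ a ↔ a = t ∧ √(2 * μ * τ) ≤ t := by
  constructor
  · intro h
    obtain rfl := eq_of_mem_coordProx_of_pos hτ ht h
    exact ⟨rfl, (self_mem_coordProx_self_iff hτ ht).1 h⟩
  · rintro ⟨rfl, h⟩
    exact (self_mem_coordProx_self_iff hτ ht).2 h

theorem mul_le_sqrt_mul_iff (hτ : 0 < τ) {c u : ℝ} : τ * u ≤ √(c * τ) ↔ u ≤ √(c / τ) := by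
  have sqrt_eq : √(c * τ) = τ * √(c / τ) := by
    rw [← Real.sqrt_sq hτ.le, ← Real.sqrt_mul (sq_nonneg τ), Real.sqrt_sq hτ.le]
    field_simp
  rw [sqrt_eq, mul_le_mul_iff_right₀ hτ]

theorem mem_coordProx_add_mul_iff (hμ : 0 ≤ μ) (hτ : 0 < τ) {u : ℝ} :
    t ∈ coordProx μ τ (t + τ * u) ↔
      (u = 0 ∧ √(2 * μ * τ) ≤ t) ∨ (u ≤ √(2 * μ / τ) ∧ t = 0) := by
  rcases lt_trichotomy t 0 with ht | rfl | ht
  · have not_mem : t ∉ coordProx μ τ (t + τ * u) := fun h => ht.not_ge h.1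
    have not_sqrt_le : ¬ √(2 * μ * τ) ≤ t := (ht.trans_le (Real.sqrt_nonneg _)).not_ge
    simp only [not_mem, not_sqrt_le, ht.ne, and_false, or_false]
  · rw [zero_add, zero_mem_coordProx_iff hμ hτ, mul_le_sqrt_mul_iff hτ]
    refine ⟨fun hu => .inr ⟨hu, rfl⟩, ?_⟩
    rintro (⟨rfl, -⟩ | ⟨hu, -⟩)
    exacts [Real.sqrt_nonneg _, hu]
  · simp only [mem_coordProx_iff_of_pos hτ ht, add_eq_left, mul_eq_zero, hτ.ne', ht.ne', false_or,
      and_false, or_false]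

end ScalarProx

section VectorProx

variable {m : ℕ} {μ τ : ℝ} {v z : EuclideanSpace ℝ (Fin m)}

theorem gfun_of_not_nonneg (hz : ¬ ∀ i, 0 ≤ z i) : gfun μ z = ⊤ := if_neg hz

theorem gfun_add_sq_dist_eq_sum_coordCost (hz : ∀ i, 0 ≤ z i) :
    gfun μ z + ((1 / (2 * τ) * ‖z - v‖ ^ 2 : ℝ) : EReal) =
      ((∑ i, coordCost μ τ (v i) (z i) : ℝ) : EReal) := by
  rw [gfun, if_pos hz, ← EReal.coe_add, EuclideanSpace.real_norm_sq_eq]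
  simp only [coordCost, zeroNorm, Finset.sum_add_distrib, ← Finset.mul_sum, Finset.sum_boole,
    PiLp.sub_apply]

theorem nonneg_of_mem_proxSet (hz : z ∈ proxSet μ τ v) (i : Fin m) : 0 ≤ z i := by
  by_contra hi
  have objective_le := hz 0
  rw [gfun_of_not_nonneg fun h => hi (h i), EReal.top_add_coe,
    gfun_add_sq_dist_eq_sum_coordCost fun _ => le_rfl, top_le_iff] at objective_le
  exact EReal.coe_ne_top _ objective_le

theorem mem_proxSet_iff_isMinOn (hz : ∀ i, 0 ≤ z i) :
    z ∈ proxSet μ τ v ↔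
      IsMinOn (fun y : Fin m → ℝ => ∑ i, coordCost μ τ (v i) (y i))
        (Set.univ.pi fun _ => Set.Ici 0) z := by
  rw [isMinOn_iff]
  constructor
  · intro h y hy
    have objective_le := h (WithLp.toLp 2 y)
    rwa [gfun_add_sq_dist_eq_sum_coordCost hz,
      gfun_add_sq_dist_eq_sum_coordCost fun i => hy i trivial, EReal.coe_le_coe_iff] at objective_le
  · intro h w
    by_cases hw : ∀ i, 0 ≤ w i
    · rw [gfun_add_sq_dist_eq_sum_coordCost hz, gfun_add_sq_dist_eq_sum_coordCost hw,
        EReal.coe_le_coe_iff]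
      exact h w fun i _ => hw i
    · rw [gfun_of_not_nonneg hw, EReal.top_add_coe]
      exact le_top

theorem mem_proxSet_iff_forall_mem_coordProx :
    z ∈ proxSet μ τ v ↔ ∀ i, z i ∈ coordProx μ τ (v i) := by
  suffices separable : (∀ i, 0 ≤ z i) →
      (z ∈ proxSet μ τ v ↔ ∀ i, IsMinOn (coordCost μ τ (v i)) (Set.Ici 0) (z i)) from
    ⟨fun h i => ⟨nonneg_of_mem_proxSet h i, (separable (nonneg_of_mem_proxSet h)).1 h i⟩,
      fun h => (separable fun i => (h i).1).2 fun i => (h i).2⟩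
  intro hz
  exact (mem_proxSet_iff_isMinOn hz).trans (isMinOn_sum_univ_pi_iff fun i _ => hz i)

end VectorProx

theorem stmt2_general {m : ℕ} {μ τ : ℝ} (hμ : 0 ≤ μ) (hτ : 0 < τ)
    (z u : EuclideanSpace ℝ (Fin m)) :
    z ∈ proxSet μ τ (z + τ • u) ↔
      ∀ i : Fin m,
        (u i = 0 ∧ √(2 * μ * τ) ≤ z i) ∨ (u i ≤ √(2 * μ / τ) ∧ z i = 0) := by
  rw [mem_proxSet_iff_forall_mem_coordProx]
  exact forall_congr' fun _ => mem_coordProx_add_mul_iff hμ hτ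

/-- `z ∈ Prox_{τg}(z + τu)` iff each pair `(uᵢ, zᵢ)` lies in
`Ω₁ ∪ Ω₂` with `Ω₁ = {0} × [√(2μτ), ∞)` and `Ω₂ = (−∞, √(2μ/τ)] × {0}`. -/
theorem stmt2 {m : ℕ} (μ τ : ℝ) (hμ : 0 < μ) (hτ : 0 < τ)
    (z u : EuclideanSpace ℝ (Fin m)) (hz : ∀ i, 0 ≤ z i) :
    z ∈ proxSet μ τ (z + τ • u) ↔
      ∀ i : Fin m,
        (u i = 0 ∧ Real.sqrt (2 * μ * τ) ≤ z i) ∨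
        (u i ≤ Real.sqrt (2 * μ / τ) ∧ z i = 0) :=
  stmt2_general hμ.le hτ z u
end

section
/- Let z, u ∈ ℝ^m with z_i ≥ 0 for all i. (a) If z ∈ Prox_{τg}(z + τu) for some τ > 0, then u_i = 0 for every i with z_i > 0 (i.e., u ∈ ∂g(z)). (b) Conversely, if u_i = 0 for every i with z_i > 0, then z ∈ Prox_{τg}(z + τu) for every τ with 0 < τ < min{τ₁(z), τ₂(u)}, where τ₁(z) := +∞ if z = 0 and τ₁(z) := min{ z_i²/(2μ) : z_i > 0 } otherwise, and τ₂(u) := +∞ if u_i ≤ 0 for all i and τ₂(u) := min{ 2μ/u_i² : u_i > 0 } otherwise. -/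
open scoped RealInnerProductSpace
open Filter Topology

/-!
The proximal objective is a sum over coordinates, so `z ≥ 0` is a proximal point of `v` exactly
when each `z i` minimizes `μ · 1_{t ≠ 0} + (t - v i)² / (2τ)` over `t ≥ 0`. A nonzero minimizer is a
critical point of the quadratic and hence equals `v i`; for `v i > 0`, the choice between the two
candidates `0` and `v i` is decided by comparing `(v i)²` with the threshold `2μτ`.
-/

/-- The contribution `μ · 1_{t ≠ 0} + (t - v)² / (2τ)` of a single coordinate, with value `t`, to
the objective minimized in `proxSet μ τ`. The constraint `0 ≤ t` is not part of it: it enters as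
the set `Set.Ici 0` over which this function is minimized. -/
noncomputable def scalarProxObjective (μ τ v t : ℝ) : ℝ :=
  (if t = 0 then 0 else μ) + 1 / (2 * τ) * (t - v) ^ 2

section Separable

variable {ι β : Type*} [Fintype ι] {α : ι → Type*}
  [AddCommMonoid β] [PartialOrder β] [IsOrderedCancelAddMonoid β]

theorem isMinOn_pi_sum_iff {f : ∀ i, α i → β} {S : ∀ i, Set (α i)} {x : ∀ i, α i}
    (hx : x ∈ Set.univ.pi S) :
    IsMinOn (fun y : ∀ i, α i => ∑ i, f i (y i)) (Set.univ.pi S) x ↔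
      ∀ i, IsMinOn (f i) (S i) (x i) := by
  classical
  simp only [isMinOn_iff]
  constructor
  · intro hmin i t ht
    have hle := hmin (Function.update x i t) ((Set.update_mem_pi_iff_of_mem hx).2 fun _ => ht)
    have hrest : ∑ j ∈ Finset.univ.erase i, f j (Function.update x i t j) =
        ∑ j ∈ Finset.univ.erase i, f j (x j) :=
      Finset.sum_congr rfl fun j hj => by rw [Function.update_of_ne (Finset.ne_of_mem_erase hj)]
    rw [← Finset.add_sum_erase _ _ (Finset.mem_univ i),
      ← Finset.add_sum_erase _ (fun j => f j (Function.update x i t j)) (Finset.mem_univ i),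
      hrest, Function.update_self] at hle
    exact le_of_add_le_add_right hle
  · exact fun hmin y hy => Finset.sum_le_sum fun i _ => hmin i (y i) (hy i (Set.mem_univ i))

end Separable

section Prox

variable {m : ℕ} {μ τ : ℝ} {z v : EuclideanSpace ℝ (Fin m)}

theorem mul_zeroNorm_eq_sum (μ : ℝ) (z : EuclideanSpace ℝ (Fin m)) :
    μ * zeroNorm z = ∑ i, if z i = 0 then 0 else μ := by
  simp [zeroNorm, Finset.sum_ite, mul_comm]

theorem gfun_add_eq_sum_scalarProxObjective (μ τ : ℝ) (v : EuclideanSpace ℝ (Fin m))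
    (hz : ∀ i, 0 ≤ z i) :
    gfun μ z + ((1 / (2 * τ) * ‖z - v‖ ^ 2 : ℝ) : EReal) =
      ((∑ i, scalarProxObjective μ τ (v i) (z i) : ℝ) : EReal) := by
  rw [gfun, if_pos hz, ← EReal.coe_add, mul_zeroNorm_eq_sum, EuclideanSpace.real_norm_sq_eq,
    Finset.mul_sum, ← Finset.sum_add_distrib]
  rfl

theorem mem_proxSet_iff_isMinOn_sum (hz : ∀ i, 0 ≤ z i) :
    z ∈ proxSet μ τ v ↔
      IsMinOn (fun w : Fin m → ℝ => ∑ i, scalarProxObjective μ τ (v i) (w i))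
        (Set.univ.pi fun _ => Set.Ici 0) z := by
  rw [isMinOn_iff]
  constructor
  · intro hmem w hw
    have hw' : ∀ i, 0 ≤ WithLp.toLp 2 w i := fun i => hw i (Set.mem_univ i)
    have hle := hmem (WithLp.toLp 2 w)
    rwa [gfun_add_eq_sum_scalarProxObjective μ τ v hz,
      gfun_add_eq_sum_scalarProxObjective μ τ v hw', EReal.coe_le_coe_iff] at hle
  · intro hmin w
    by_cases hw : ∀ i, 0 ≤ w i
    · rw [gfun_add_eq_sum_scalarProxObjective μ τ v hz,
        gfun_add_eq_sum_scalarProxObjective μ τ v hw, EReal.coe_le_coe_iff]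
      exact hmin w fun i _ => hw i
    · rw [gfun.eq_def μ w, if_neg hw, EReal.top_add_coe]
      exact le_top

theorem mem_proxSet_iff (hz : ∀ i, 0 ≤ z i) :
    z ∈ proxSet μ τ v ↔
      ∀ i, IsMinOn (scalarProxObjective μ τ (v i)) (Set.Ici 0) (z i) :=
  (mem_proxSet_iff_isMinOn_sum hz).trans (isMinOn_pi_sum_iff fun i _ => hz i)

end Prox

namespace scalarProxObjective

variable {μ τ v t : ℝ} {s : Set ℝ}

theorem apply_zero (μ τ v : ℝ) : scalarProxObjective μ τ v 0 = 1 / (2 * τ) * v ^ 2 := by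
  simp [scalarProxObjective]

theorem apply_of_ne_zero (μ τ v : ℝ) (ht : t ≠ 0) :
    scalarProxObjective μ τ v t = μ + 1 / (2 * τ) * (t - v) ^ 2 := by
  simp [scalarProxObjective, ht]

theorem hasDerivAt (μ τ v : ℝ) (ht : t ≠ 0) :
    HasDerivAt (scalarProxObjective μ τ v) ((t - v) / τ) t := by
  have hquad : HasDerivAt (fun r => μ + 1 / (2 * τ) * (r - v) ^ 2) ((t - v) / τ) t := by
    have hderiv :=
      ((((hasDerivAt_id t).sub_const v).fun_pow 2).const_mul (1 / (2 * τ))).const_add μ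
    exact hderiv.congr_deriv (by norm_num; ring)
  refine hquad.congr_of_eventuallyEq ?_
  filter_upwards [isOpen_ne.mem_nhds ht] with r hr using apply_of_ne_zero μ τ v hr

theorem eq_of_isLocalMin (hτ : τ ≠ 0) (ht : t ≠ 0)
    (hmin : IsLocalMin (scalarProxObjective μ τ v) t) : t = v := by
  have hderiv : (t - v) / τ = 0 := hmin.hasDerivAt_eq_zero (hasDerivAt μ τ v ht)
  exact sub_eq_zero.1 ((div_eq_zero_iff.1 hderiv).resolve_right hτ)

theorem isMinOn_self_of_le_sq (hτ : 0 < τ) (ht : t ≠ 0) (hthreshold : 2 * μ * τ ≤ t ^ 2) :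
    IsMinOn (scalarProxObjective μ τ t) s t := by
  refine isMinOn_iff.2 fun r _ => ?_
  have hvalue : scalarProxObjective μ τ t t = μ := by simp [apply_of_ne_zero μ τ t ht]
  rw [hvalue]
  rcases eq_or_ne r 0 with rfl | hr
  · rw [apply_zero, one_div_mul_eq_div, le_div_iff₀ (by positivity)]
    linarith
  · rw [apply_of_ne_zero μ τ t hr]
    exact le_add_of_nonneg_right (by positivity)

theorem isMinOn_zero_of_sq_le (hτ : 0 < τ) (hthreshold : v ^ 2 ≤ 2 * μ * τ) :
    IsMinOn (scalarProxObjective μ τ v) s 0 := by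
  refine isMinOn_iff.2 fun r _ => ?_
  rcases eq_or_ne r 0 with rfl | hr
  · exact le_rfl
  · have hzero_le : 1 / (2 * τ) * v ^ 2 ≤ μ := by
      rw [one_div_mul_eq_div, div_le_iff₀ (by positivity)]
      linarith
    rw [apply_zero, apply_of_ne_zero μ τ v hr]
    exact hzero_le.trans (le_add_of_nonneg_right (by positivity))

theorem isMinOn_zero_of_nonpos (hμ : 0 ≤ μ) (hτ : 0 ≤ τ) (hv : v ≤ 0) :
    IsMinOn (scalarProxObjective μ τ v) (Set.Ici 0) 0 := by
  refine isMinOn_iff.2 fun r hr => ?_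
  rcases eq_or_ne r 0 with rfl | hr0
  · exact le_rfl
  · have hsq : v ^ 2 ≤ (r - v) ^ 2 :=
      sq_le_sq.2 (by rw [abs_of_nonpos hv, abs_of_nonneg] <;> linarith [Set.mem_Ici.1 hr])
    rw [apply_zero, apply_of_ne_zero μ τ v hr0]
    exact le_add_of_nonneg_of_le hμ (by gcongr)

end scalarProxObjective

open scalarProxObjective

theorem eq_zero_of_mem_proxSet_add_smul {m : ℕ} {μ τ : ℝ} {z u : EuclideanSpace ℝ (Fin m)}
    (hz : ∀ i, 0 ≤ z i) (hτ : τ ≠ 0) (hmem : z ∈ proxSet μ τ (z + τ • u)) {i : Fin m}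
    (hi : 0 < z i) : u i = 0 := by
  have hmin : IsLocalMin (scalarProxObjective μ τ (z i + τ * u i)) (z i) :=
    ((mem_proxSet_iff hz).1 hmem i).isLocalMin (Ici_mem_nhds hi)
  have hfix : z i = z i + τ * u i := eq_of_isLocalMin hτ hi.ne' hmin
  exact (mul_eq_zero.1 (left_eq_add.1 hfix)).resolve_left hτ

/-- (a) `z ∈ Prox_{τg}(z + τu)` for some `τ > 0` implies `u ∈ ∂g(z)`;
(b) conversely `u ∈ ∂g(z)` implies `z ∈ Prox_{τg}(z + τu)` for every
`0 < τ < min{τ₁(z), τ₂(u)}`, where `τ < τ₁(z)` means `τ < zᵢ²/(2μ)` for every `i`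
with `zᵢ > 0`, and `τ < τ₂(u)` means `τ < 2μ/uᵢ²` for every `i` with `uᵢ > 0`. -/
theorem stmt3 {m : ℕ} (μ : ℝ) (hμ : 0 < μ)
    (z u : EuclideanSpace ℝ (Fin m)) (hz : ∀ i, 0 ≤ z i) :
    ((∃ τ : ℝ, 0 < τ ∧ z ∈ proxSet μ τ (z + τ • u)) →
      (∀ i, 0 < z i → u i = 0)) ∧
    ((∀ i, 0 < z i → u i = 0) →
      ∀ τ : ℝ, 0 < τ →
        (∀ i, 0 < z i → τ < (z i) ^ 2 / (2 * μ)) →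
        (∀ i, 0 < u i → τ < 2 * μ / (u i) ^ 2) →
        z ∈ proxSet μ τ (z + τ • u)) := by
  refine ⟨fun ⟨τ, hτ, hmem⟩ i hi => eq_zero_of_mem_proxSet_add_smul hz hτ.ne' hmem hi,
    fun hu τ hτ hτz hτu => (mem_proxSet_iff hz).2 fun i => ?_⟩
  change IsMinOn (scalarProxObjective μ τ (z i + τ * u i)) (Set.Ici 0) (z i)
  rcases (hz i).eq_or_lt' with hzero | hpos
  · rw [hzero, zero_add]
    rcases le_or_gt (u i) 0 with hnonpos | hupos
    · exact isMinOn_zero_of_nonpos hμ.le hτ.le (mul_nonpos_of_nonneg_of_nonpos hτ.le hnonpos)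
    · refine isMinOn_zero_of_sq_le hτ ?_
      have hthreshold : τ * u i ^ 2 < 2 * μ := (lt_div_iff₀ (by positivity)).1 (hτu i hupos)
      calc (τ * u i) ^ 2 = (τ * u i ^ 2) * τ := by ring
        _ ≤ 2 * μ * τ := by gcongr
  · rw [hu i hpos, mul_zero, add_zero]
    have hthreshold : τ * (2 * μ) < z i ^ 2 := (lt_div_iff₀ (by positivity)).1 (hτz i hpos)
    exact isMinOn_self_of_le_sq hτ hpos.ne' (by linarith)
end
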